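/- Let ι be an additive commutative group, R a commutative ring equipped with an ι-grading R = ⊕_{μ∈ι} R_μ, and A ⊆ R a graded subring, meaning a subring such that for every a ∈ A each homogeneous component of a again lies in A. Assume R is an integral domain. Let λ ∈ ι be an element such that d·λ ≠ 0 for every integer d ≥ 1, and let f ∈ R_λ be a nonzero homogeneous element of weight λ. If f satisfies a monic polynomial relation f^n + b₁ f^{n−1} + ⋯ + b_n = 0 of some degree n ≥ 1 with coefficients b₁, …, b_n ∈ A, then there exists an integer d with 1 ≤ d ≤ n and a nonzero element of A which is homogeneous of weight d·λ, i.e. A ∩ R_{d·λ} ≠ {0}. -/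

import Mathlib

/-!
Take the component of weight `n • λ` in the relation. The leading term `f ^ n` is its own
component, while the component of `b i * f ^ (n - 1 - i)` is `(b i)_{(i + 1) • λ} * f ^ (n - 1 - i)`.
If the component of `b i` of weight `(i + 1) • λ` vanished for every `i`, this would read `f ^ n = 0`,
which is impossible in a domain. A nonvanishing one lies in `A` because `A` is a graded subring,
and its weight is `d • λ` with `d = i + 1`.
-/

open DirectSum

/-- Let `R` be an `ι`-graded commutative integral domain and `A ⊆ R` a graded subring
(i.e. stable under taking homogeneous components). Let `λ ∈ ι` be such that `d • λ ≠ 0`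
for all integers `d ≥ 1`, and let `f ∈ R_λ` be a nonzero homogeneous element of weight
`λ`. If `f` satisfies a monic polynomial relation
`f^n + b₁ f^(n-1) + ⋯ + b_n = 0` with `n ≥ 1` and coefficients `b_i ∈ A`, then there
exists `1 ≤ d ≤ n` and a nonzero element of `A` homogeneous of weight `d • λ`. -/
theorem exists_nonzero_homogeneous_in_graded_subring_of_integral_relation
    {ι R : Type*} [AddCommGroup ι] [DecidableEq ι] [CommRing R] [IsDomain R]
    (𝒜 : ι → AddSubgroup R) [GradedRing 𝒜]
    (A : Subring R) (hA : ∀ a ∈ A, ∀ μ : ι, (DirectSum.decompose 𝒜 a μ : R) ∈ A)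
    (lam : ι) (hlam : ∀ d : ℕ, 1 ≤ d → d • lam ≠ 0)
    (f : R) (hf : f ∈ 𝒜 lam) (hf0 : f ≠ 0)
    (n : ℕ) (hn : 1 ≤ n) (b : Fin n → R) (hb : ∀ i, b i ∈ A)
    (hrel : f ^ n + ∑ i : Fin n, b i * f ^ (n - 1 - (i : ℕ)) = 0) :
    ∃ d : ℕ, 1 ≤ d ∧ d ≤ n ∧ ∃ a : R, a ∈ A ∧ a ∈ 𝒜 (d • lam) ∧ a ≠ 0 := by
  classical
  by_contra! hcon
  have hb0 : ∀ i : Fin n, (decompose 𝒜 (b i) (((i : ℕ) + 1) • lam) : R) = 0 := fun i =>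
    hcon (i + 1) (by omega) (by omega) _ (hA _ (hb i) _) (SetLike.coe_mem _)
  have hterm : ∀ i : Fin n,
      (decompose 𝒜 (b i * f ^ (n - 1 - (i : ℕ))) (n • lam) : R) = 0 := by
    intro i
    have hw : n • lam = ((i : ℕ) + 1) • lam + (n - 1 - (i : ℕ)) • lam := by
      rw [← add_smul]
      congr 1
      omega
    rw [hw, coe_decompose_mul_add_of_right_mem 𝒜 (SetLike.pow_mem_graded _ hf), hb0, zero_mul]
  have h := congrArg (GradedRing.proj 𝒜 (n • lam)) hrel
  rw [map_add, map_sum, map_zero] at h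
  simp only [GradedRing.proj_apply, hterm, Finset.sum_const_zero, add_zero] at h
  rw [decompose_of_mem_same 𝒜 (SetLike.pow_mem_graded n hf)] at h
  exact pow_ne_zero n hf0 h
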